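/- Let d ≥ 1, let ω ∈ ℝ^d be nonresonant, let f : ℝ^d → ℝ be real analytic and 2π-periodic in each coordinate with mean value f₀, let g : ℝ → ℝ be real analytic, and let c₀ ∈ ℝ satisfy g(c₀) = f₀ and a := g'(c₀) ≠ 0. Then there exist ε̄ > 0 and ζ̄ > 0 such that for every ε with 0 < |ε| < ε̄ and every ζ with |ζ| < ζ̄ there exist a function u(·, ε, ζ) : ℝ^d → ℝ, real analytic and 2π-periodic in each coordinate with zero mean value, and a constant R(ε, ζ) ∈ ℝ, such that the function x(t) = c₀ + ζ + u(ωt, ε, ζ) satisfies ε x''(t) + x'(t) + ε g(x(t)) = ε f(ωt) + ε R(ε, ζ) for all t ∈ ℝ (that is, u solves the range equation obtained by projecting the equation onto the nonzero Fourier modes). -/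

import Mathlib

open MeasureTheory Filter
open scoped Topology NNReal ENNReal Nat

/-- local uniform bounds -/
theorem rs_local_bound {V W : Type*} [NormedAddCommGroup V] [NormedSpace ℝ V]
    [NormedAddCommGroup W] [NormedSpace ℝ W] [CompleteSpace W] {f : V → W} {x₀ : V}
    (hf : AnalyticAt ℝ f x₀) :
    ∃ r : ℝ≥0, 0 < r ∧ ∃ C : ℝ≥0, ∀ᶠ x in 𝓝 x₀,
      (∀ k : ℕ, ‖((k ! : ℝ)⁻¹ • iteratedFDeriv ℝ k f x)‖ * (r : ℝ) ^ k ≤ C) ∧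
      ∀ y : V, ‖y‖ < r →
        HasSum (fun k : ℕ => ((k ! : ℝ)⁻¹ • iteratedFDeriv ℝ k f x) (fun _ => y)) (f (x + y)) := by
  obtain ⟨p, R, hp⟩ := hf
  obtain ⟨R', hR'0, hR'⟩ := ENNReal.lt_iff_exists_nnreal_btwn.1 hp.r_pos
  have hR'0 : 0 < R' := by exact_mod_cast hR'0
  set r : ℝ≥0 := R' / 2 with hr
  have hr0 : 0 < r := by positivity
  have hrr : r + r = R' := by simp [hr]
  have hrrE : (r + r : ℝ≥0∞) < p.radius := by
    rw [← ENNReal.coe_add, hrr]; exact hR'.trans_le hp.r_le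
  refine ⟨r, hr0, ∑' s : Σ k l : ℕ, { s : Finset (Fin (k + l)) // s.card = l },
            ‖p (s.1 + s.2.1)‖₊ * r ^ s.2.1 * r ^ s.1, ?_⟩
  · have hS := p.changeOriginSeries_summable_aux₁ hrrE
    have hball : Metric.ball x₀ r ∈ 𝓝 x₀ := Metric.ball_mem_nhds _ (by exact_mod_cast hr0)
    filter_upwards [hball] with x hx
    have hxn : ‖x - x₀‖₊ < r := by
      rw [Metric.mem_ball, dist_eq_norm] at hx
      exact_mod_cast hx
    have hxR : ((‖x - x₀‖₊ : ℝ≥0∞)) < R := by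
      refine lt_trans (ENNReal.coe_lt_coe.2 (hxn.trans_le ?_)) hR'
      rw [← hrr]; exact le_add_self
    have hpx := hp.changeOrigin hxR
    rw [add_sub_cancel] at hpx
    constructor
    · intro k
      have h1 : ‖iteratedFDeriv ℝ k f x‖ ≤ (k ! : ℝ) * ‖p.changeOrigin (x - x₀) k‖ := by
        refine ContinuousMultilinearMap.opNorm_le_bound (by positivity) fun v => ?_
        rw [hpx.iteratedFDeriv_eq_sum_of_completeSpace]
        refine (norm_sum_le _ _).trans ?_
        refine (Finset.sum_le_sum (g := fun _ => ‖p.changeOrigin (x - x₀) k‖ * ∏ i, ‖v i‖)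
          fun σ _ => ?_).trans ?_
        · refine ((p.changeOrigin (x - x₀) k).le_opNorm _).trans ?_
          rw [Equiv.prod_comp σ (fun i => ‖v i‖)]
        · simp [Fintype.card_perm, mul_assoc]
      have h2 : ‖((k ! : ℝ)⁻¹ • iteratedFDeriv ℝ k f x)‖ ≤ ‖p.changeOrigin (x - x₀) k‖ := by
        rw [norm_smul, norm_inv, Real.norm_natCast, inv_mul_le_iff₀ (by positivity)]
        exact h1
      have h3 : ‖p.changeOrigin (x - x₀) k‖₊ * r ^ k ≤
          ∑' s : Σ k l : ℕ, { s : Finset (Fin (k + l)) // s.card = l },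
            ‖p (s.1 + s.2.1)‖₊ * r ^ s.2.1 * r ^ s.1 := by
        have hS' := hS
        rw [NNReal.summable_sigma] at hS
        rw [hS'.tsum_sigma' hS.1]
        refine le_trans ?_ (hS.2.le_tsum k fun _ _ => zero_le)
        dsimp only
        rw [NNReal.tsum_mul_right]
        gcongr
        refine (p.nnnorm_changeOrigin_le k ?_).trans ?_
        · exact hxR.trans_le hp.r_le
        · have hrad : (r : ℝ≥0∞) < p.radius := lt_of_le_of_lt le_self_add hrrE
          refine Summable.tsum_le_tsum (fun s => ?_)
            (p.changeOriginSeries_summable_aux₂ (hxR.trans_le hp.r_le) k)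
            (p.changeOriginSeries_summable_aux₂ hrad k)
          gcongr
      calc _ ≤ ‖p.changeOrigin (x - x₀) k‖ * (r : ℝ) ^ k := by gcongr
        _ ≤ _ := by exact_mod_cast h3
    · intro y hy
      have := hpx.hasSum_iteratedFDeriv (y := y) ?_
      · simpa using this
      · have hy' : ‖y‖₊ < r := by exact_mod_cast hy
        rw [Metric.mem_eball, edist_zero_right, enorm_eq_nnnorm]
        refine lt_of_lt_of_le (ENNReal.coe_lt_coe.2 hy') ?_
        refine ENNReal.le_sub_of_add_le_right ENNReal.coe_ne_top ?_
        refine le_trans ?_ hR'.le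
        rw [← ENNReal.coe_add, ← hrr]
        exact ENNReal.coe_le_coe.2 (by gcongr)

theorem rs_compact_bound {V W : Type*} [NormedAddCommGroup V] [NormedSpace ℝ V]
    [NormedAddCommGroup W] [NormedSpace ℝ W] [CompleteSpace W] {f : V → W} {K : Set V}
    (hK : IsCompact K) (hf : ∀ x, AnalyticAt ℝ f x) :
    ∃ r : ℝ≥0, 0 < r ∧ ∃ C : ℝ≥0, ∀ x ∈ K,
      (∀ k : ℕ, ‖((k ! : ℝ)⁻¹ • iteratedFDeriv ℝ k f x)‖ * (r : ℝ) ^ k ≤ C) ∧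
      ∀ y : V, ‖y‖ < r →
        HasSum (fun k : ℕ => ((k ! : ℝ)⁻¹ • iteratedFDeriv ℝ k f x) (fun _ => y)) (f (x + y)) := by
  refine hK.induction_on (p := fun K => ∃ r : ℝ≥0, 0 < r ∧ ∃ C : ℝ≥0, ∀ x ∈ K,
      (∀ k : ℕ, ‖((k ! : ℝ)⁻¹ • iteratedFDeriv ℝ k f x)‖ * (r : ℝ) ^ k ≤ C) ∧
      ∀ y : V, ‖y‖ < r →
        HasSum (fun k : ℕ => ((k ! : ℝ)⁻¹ • iteratedFDeriv ℝ k f x) (fun _ => y)) (f (x + y)))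
    ?_ ?_ ?_ ?_
  · exact ⟨1, one_pos, 0, by simp⟩
  · rintro s t hst ⟨r, hr, C, h⟩
    exact ⟨r, hr, C, fun x hx => h x (hst hx)⟩
  · rintro s t ⟨r, hr, C, h⟩ ⟨r', hr', C', h'⟩
    refine ⟨min r r', lt_min hr hr', max C C', ?_⟩
    rintro x (hx | hx)
    · refine ⟨fun k => ?_, fun y hy => (h x hx).2 y (hy.trans_le (by simp))⟩
      refine le_trans ?_ (((h x hx).1 k).trans (by simp))
      gcongr
      simp
    · refine ⟨fun k => ?_, fun y hy => (h' x hx).2 y (hy.trans_le (by simp))⟩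
      refine le_trans ?_ (((h' x hx).1 k).trans (by simp))
      gcongr
      simp
  · intro x _
    obtain ⟨r, hr, C, h⟩ := rs_local_bound (hf x)
    exact ⟨_, mem_nhdsWithin_of_mem_nhds h, r, hr, C, fun y hy => hy⟩

/-- Superposition operators are analytic. -/
theorem rs_superposition {K V W : Type*} [TopologicalSpace K] [CompactSpace K]
    [NormedAddCommGroup V] [NormedSpace ℝ V]
    [NormedAddCommGroup W] [NormedSpace ℝ W] [CompleteSpace W]
    (q : ∀ k : ℕ, C(K, V [×k]→L[ℝ] W)) (r C : ℝ≥0) (hr : 0 < r)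
    (hq : ∀ k x, ‖q k x‖ * (r : ℝ) ^ k ≤ C)
    (N : C(K, V) → C(K, W))
    (hN : ∀ (v : C(K, V)) (x : K), ‖v x‖ < r → HasSum (fun k => q k x (fun _ => v x)) (N v x)) :
    AnalyticAt ℝ N 0 := by
  have hb : ∀ k x, ‖q k x‖ ≤ C / (r : ℝ) ^ k := by
    intro k x
    rw [le_div_iff₀ (by positivity)]
    exact hq k x
  let P : FormalMultilinearSeries ℝ C(K, V) C(K, W) := fun k =>
    MultilinearMap.mkContinuous
      { toFun := fun v => ⟨fun x => q k x (fun i => v i x), by fun_prop⟩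
        map_update_add' := by
          intro _ m i a b
          ext x
          have : ∀ c : C(K, V), (fun j => (Function.update m i c j) x)
              = Function.update (fun j => m j x) i (c x) := by
            intro c; ext j; by_cases h : j = i
            · subst h; simp
            · simp [h]
          simp [this]
        map_update_smul' := by
          intro _ m i a b
          ext x
          have : ∀ c : C(K, V), (fun j => (Function.update m i c j) x)
              = Function.update (fun j => m j x) i (c x) := by
            intro c; ext j; by_cases h : j = i
            · subst h; simp
            · simp [h]
          simp [this] }
      (C / (r : ℝ) ^ k) (by
        intro v
        refine (ContinuousMap.norm_le _ (by positivity)).2 fun x => ?_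
        refine ((q k x).le_opNorm _).trans ?_
        gcongr with i
        · exact hb k x
        · exact (v i).norm_coe_le_norm x)
  have hP : ∀ k (v : Fin k → C(K, V)) x, P k v x = q k x (fun i => v i x) := fun _ _ _ => rfl
  have hPn : ∀ k, ‖P k‖ ≤ C / (r : ℝ) ^ k := fun k =>
    MultilinearMap.mkContinuous_norm_le _ (by positivity) _
  refine ⟨P, (r : ℝ≥0∞), ?_, by exact_mod_cast hr, ?_⟩
  · refine P.le_radius_of_bound C fun n => ?_
    rw [← le_div_iff₀ (by positivity)]
    exact hPn n
  · intro v hv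
    have hv' : ‖v‖ < r := by
      rw [Metric.mem_eball, edist_zero_right, enorm_eq_nnnorm] at hv
      exact_mod_cast hv
    have hs : Summable (fun k => P k (fun _ => v)) := by
      refine Summable.of_norm_bounded (g := fun k => C * (‖v‖ / r) ^ k) ?_ fun k => ?_
      · exact (summable_geometric_of_lt_one (by positivity)
          ((div_lt_one (by positivity)).2 hv')).mul_left _
      · refine ((P k).le_opNorm _).trans ?_
        simp only [Finset.prod_const, Finset.card_univ, Fintype.card_fin]
        calc _ ≤ C / (r : ℝ) ^ k * ‖v‖ ^ k := by gcongr; exact hPn k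
          _ = _ := by rw [div_pow]; ring
    have : (∑' k, P k (fun _ => v)) = N v := by
      ext x
      have h1 := (hs.hasSum.map (ContinuousMap.evalCLM ℝ x) (ContinuousMap.evalCLM ℝ x).continuous)
      have h2 := hN v x ((v.norm_coe_le_norm x).trans_lt hv')
      exact h1.unique h2
    rw [zero_add, ← this]
    exact hs.hasSum

/-- Composition with an analytic function is analytic on `C(K, ℝ)`. -/
theorem rs_comp_analytic {K : Type*} [TopologicalSpace K] [CompactSpace K]
    {Q : ℝ → ℝ} (hQ : ∀ x, AnalyticAt ℝ Q x) (N : C(K, ℝ) → C(K, ℝ))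
    (hN : ∀ v x, N v x = Q (v x)) (v₀ : C(K, ℝ)) : AnalyticAt ℝ N v₀ := by
  obtain ⟨r, hr, C, h⟩ := rs_compact_bound (isCompact_range v₀.continuous) hQ
  have hcd : ContDiff ℝ ⊤ Q := by
    rw [contDiff_iff_contDiffAt]
    exact fun x => (hQ x).contDiffAt
  have hc : ∀ k, Continuous (iteratedFDeriv ℝ k Q) := fun k =>
    hcd.continuous_iteratedFDeriv (by simp)
  have := rs_superposition (K := K)
    (fun k => ⟨fun x => ((k ! : ℝ)⁻¹ • iteratedFDeriv ℝ k Q (v₀ x)),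
      by have := hc k; fun_prop⟩) r C hr
    (fun k x => (h (v₀ x) ⟨x, rfl⟩).1 k) (fun v => N (v₀ + v))
    (fun v x hv => by
      rw [hN]
      exact (h (v₀ x) ⟨x, rfl⟩).2 (v x) hv)
  have h2 : AnalyticAt ℝ (fun v => v - v₀) v₀ := analyticAt_id.sub analyticAt_const
  have h3 := AnalyticAt.fun_comp (g := fun v => N (v₀ + v)) (f := fun v => v - v₀) (x := v₀)
    (by simpa using this) h2
  simpa using h3

/-- The covering map of the torus, with period `2π`. -/
noncomputable def rsPi (d : ℕ) (ψ : Fin d → ℝ) : UnitAddTorus (Fin d) :=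
  fun i => ((ψ i / (2 * Real.pi) : ℝ) : UnitAddCircle)

theorem rsPi_add (d : ℕ) (ψ χ : Fin d → ℝ) : rsPi d (ψ + χ) = rsPi d ψ + rsPi d χ := by
  ext i
  simp only [rsPi, Pi.add_apply, add_div]
  exact AddCircle.coe_add _ _ _

theorem rsPi_zero (d : ℕ) : rsPi d 0 = 0 := by
  ext i
  simp [rsPi]

theorem rsPi_continuous (d : ℕ) : Continuous (rsPi d) := by
  refine continuous_pi fun i => ?_
  exact (AddCircle.continuous_mk' 1).comp (by fun_prop)

theorem rsPi_isOpenQuotientMap (d : ℕ) : IsOpenQuotientMap (rsPi d) := by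
  have h1 : IsOpenQuotientMap
      (Pi.map (fun (_ : Fin d) (s : ℝ) => ((s / (2 * Real.pi) : ℝ) : UnitAddCircle))) := by
    refine IsOpenQuotientMap.piMap fun i => ?_
    have h2 : IsOpenQuotientMap (fun s : ℝ => s / (2 * Real.pi)) := by
      have := (Homeomorph.mulRight₀ ((2 * Real.pi)⁻¹ : ℝ) (by positivity)).isOpenQuotientMap
      simpa [div_eq_mul_inv] using this
    have h3 : IsOpenQuotientMap (fun s : ℝ => (s : UnitAddCircle)) :=
      QuotientAddGroup.isOpenQuotientMap_mk
    exact h3.comp h2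
  exact h1

theorem rsPi_surj_box (d : ℕ) (x : UnitAddTorus (Fin d)) :
    ∃ ψ ∈ Set.Icc (0 : Fin d → ℝ) (fun _ => 2 * Real.pi), rsPi d ψ = x := by
  have h : ∀ i, ∃ s : ℝ, s ∈ Set.Ico (0 : ℝ) (0 + 1) ∧ (s : UnitAddCircle) = x i := by
    intro i
    have := AddCircle.coe_image_Ico_eq (p := (1 : ℝ)) 0
    have hx : x i ∈ (Set.univ : Set UnitAddCircle) := trivial
    rw [← this] at hx
    exact hx
  choose s hs hsx using h
  have hp := Real.pi_pos
  refine ⟨fun i => 2 * Real.pi * s i, ⟨fun i => ?_, fun i => ?_⟩, ?_⟩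
  · have := (hs i).1
    simp only [Pi.zero_apply]; positivity
  · have := (hs i).2
    simp only; nlinarith
  · ext i
    rw [← hsx]
    simp only [rsPi]
    congr 1
    field_simp

theorem rsPi_periodic (d : ℕ) (ψ : Fin d → ℝ) (i : Fin d) :
    rsPi d (ψ + Pi.single i (2 * Real.pi)) = rsPi d ψ := by
  rw [rsPi_add]
  ext j
  have hp := Real.pi_pos
  by_cases h : j = i
  · subst h
    simp only [Pi.add_apply, rsPi, Pi.single_eq_same]
    rw [div_self (by positivity)]
    have : ((1 : ℝ) : UnitAddCircle) = 0 := AddCircle.coe_period 1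
    rw [this, add_zero]
  · simp [rsPi, h]

/-- Periodic continuous functions descend to the torus. -/
theorem rs_lift (d : ℕ) {W : Type*} [TopologicalSpace W] (h : (Fin d → ℝ) → W)
    (hc : Continuous h)
    (hper : ∀ (ψ : Fin d → ℝ) (i : Fin d), h (ψ + Pi.single i (2 * Real.pi)) = h ψ) :
    ∃ H : C(UnitAddTorus (Fin d), W), ∀ ψ, H (rsPi d ψ) = h ψ := by
  let G : AddSubgroup (Fin d → ℝ) :=
    { carrier := {p | ∀ ψ, h (ψ + p) = h ψ}
      zero_mem' := by intro ψ; simp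
      add_mem' := by
        intro a b ha hb ψ
        rw [← add_assoc, hb, ha]
      neg_mem' := by
        intro a ha ψ
        have := ha (ψ + -a)
        rw [neg_add_cancel_right] at this
        exact this.symm }
  have hG : ∀ n : Fin d → ℤ, ∑ i, n i • (Pi.single i (2 * Real.pi) : Fin d → ℝ) ∈ G := by
    intro n
    refine G.sum_mem fun i _ => G.zsmul_mem ?_ _
    exact fun ψ => hper ψ i
  have hfac : ∀ ψ χ, rsPi d ψ = rsPi d χ → h ψ = h χ := by
    intro ψ χ hψ
    have h1 : ∀ i, ∃ n : ℤ, n • (1 : ℝ) = χ i / (2 * Real.pi) - ψ i / (2 * Real.pi) := by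
      intro i
      have := congrFun hψ i
      simp only [rsPi] at this
      obtain ⟨n, hn⟩ := (QuotientAddGroup.eq.1 this)
      exact ⟨n, by
        have hn' : n • (1 : ℝ) = -(ψ i / (2 * Real.pi)) + χ i / (2 * Real.pi) := hn
        rw [hn']; ring⟩
    choose n hn using h1
    have hp := Real.pi_pos
    have h2 : χ = ψ + ∑ i, n i • (Pi.single i (2 * Real.pi) : Fin d → ℝ) := by
      ext j
      have := hn j
      rw [zsmul_eq_mul, mul_one] at this
      have h3 : ∀ c, (n c • (Pi.single c (2 * Real.pi) : Fin d → ℝ)) j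
          = if j = c then (n c : ℝ) * (2 * Real.pi) else 0 := by
        intro c
        rw [Pi.smul_apply, Pi.single_apply]
        split_ifs <;> simp
      simp only [Pi.add_apply, Finset.sum_apply, h3, Finset.sum_ite_eq, Finset.mem_univ, if_true]
      rw [this]
      field_simp
      ring
    rw [h2]
    exact (hG n ψ).symm
  have hq := (rsPi_isOpenQuotientMap d).isQuotientMap
  refine ⟨⟨fun x => h (Function.surjInv hq.surjective x), ?_⟩, fun ψ => ?_⟩
  · rw [hq.continuous_iff]
    convert hc using 1
    ext ψ
    exact hfac _ _ (Function.surjInv_eq hq.surjective _)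
  · exact hfac _ _ (Function.surjInv_eq hq.surjective _)

/-- Translation on the torus. -/
noncomputable def rsTr (d : ℕ) (θ : UnitAddTorus (Fin d)) :
    C(UnitAddTorus (Fin d), ℝ) →L[ℝ] C(UnitAddTorus (Fin d), ℝ) :=
  LinearMap.mkContinuous
    { toFun := fun F => F.comp ⟨fun x => x + θ, by fun_prop⟩
      map_add' := by intro F G; ext x; simp
      map_smul' := by intro c F; ext x; simp } 1 (by
        intro F
        rw [one_mul]
        exact (ContinuousMap.norm_le _ (norm_nonneg _)).2 fun x => F.norm_coe_le_norm _)

theorem rsTr_apply (d : ℕ) (θ : UnitAddTorus (Fin d)) (F : C(UnitAddTorus (Fin d), ℝ)) (x) :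
    rsTr d θ F x = F (x + θ) := rfl

theorem rsTr_norm (d : ℕ) (θ : UnitAddTorus (Fin d)) (F : C(UnitAddTorus (Fin d), ℝ)) :
    ‖rsTr d θ F‖ ≤ ‖F‖ :=
  (ContinuousMap.norm_le _ (norm_nonneg _)).2 fun x => F.norm_coe_le_norm _

theorem rsTr_continuous (d : ℕ) (F : C(UnitAddTorus (Fin d), ℝ)) :
    Continuous (fun θ => rsTr d θ F) := by
  let Φ : C(UnitAddTorus (Fin d) × UnitAddTorus (Fin d), ℝ) :=
    ⟨fun p => F (p.2 + p.1), by fun_prop⟩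
  exact Φ.curry.continuous

/-- The mean value. -/
noncomputable def rsMean (d : ℕ) : C(UnitAddTorus (Fin d), ℝ) →L[ℝ] ℝ :=
  LinearMap.mkContinuous
    { toFun := fun F => ∫ x, F x
      map_add' := by
        intro F G
        exact integral_add (F.continuous.integrable_of_hasCompactSupport
          (HasCompactSupport.of_compactSpace _)) (G.continuous.integrable_of_hasCompactSupport
          (HasCompactSupport.of_compactSpace _))
      map_smul' := by intro c F; exact integral_const_mul _ _ } 1 (by
        intro F
        refine (norm_integral_le_of_norm_le_const
          (Eventually.of_forall fun x => F.norm_coe_le_norm x)).trans ?_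
        simp [Measure.real, volume_pi, Measure.pi_univ])

theorem rsMean_apply (d : ℕ) (F : C(UnitAddTorus (Fin d), ℝ)) : rsMean d F = ∫ x, F x := rfl

theorem rsMean_norm (d : ℕ) (F : C(UnitAddTorus (Fin d), ℝ)) : |rsMean d F| ≤ ‖F‖ := by
  have : ‖rsMean d‖ ≤ 1 := LinearMap.mkContinuous_norm_le _ zero_le_one _
  calc |rsMean d F| = ‖rsMean d F‖ := rfl
    _ ≤ ‖rsMean d‖ * ‖F‖ := (rsMean d).le_opNorm F
    _ ≤ 1 * ‖F‖ := by gcongr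
    _ = ‖F‖ := one_mul _

theorem rsMean_tr (d : ℕ) (θ) (F : C(UnitAddTorus (Fin d), ℝ)) :
    rsMean d (rsTr d θ F) = rsMean d F := by
  simp only [rsMean_apply, rsTr_apply]
  exact integral_add_right_eq_self (fun x => F x) θ

theorem rsMean_const (d : ℕ) (c : ℝ) : rsMean d (ContinuousMap.const _ c) = c := by
  simp [rsMean_apply, Measure.real, volume_pi, Measure.pi_univ]

open scoped Pointwise in
/-- The mean value as an integral over a box. -/
theorem rsMean_box (d : ℕ) (F : C(UnitAddTorus (Fin d), ℝ)) :
    ((2 * Real.pi) ^ d)⁻¹ *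
      ∫ ψ in Set.Icc (0 : Fin d → ℝ) (fun _ => 2 * Real.pi), F (rsPi d ψ) = rsMean d F := by
  have hp := Real.pi_pos
  have h1 : MeasurePreserving (fun (x : Fin d → ℝ) => (fun i => (x i : UnitAddCircle)))
      (volume.restrict (Set.univ.pi fun _ => Set.Ioc (0 : ℝ) (0 + 1)))
      (volume : Measure (UnitAddTorus (Fin d))) := by
    have := measurePreserving_pi _ _ (fun i : Fin d => AddCircle.measurePreserving_mk 1 (0 : ℝ))
    rw [← Measure.restrict_pi_pi] at this
    exact this
  have h2 : rsMean d F = ∫ x in (Set.univ.pi fun _ => Set.Ioc (0 : ℝ) (0 + 1)),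
      F (fun i : Fin d => (x i : UnitAddCircle)) := by
    rw [rsMean_apply, ← h1.map_eq]
    rw [integral_map h1.measurable.aemeasurable F.continuous.aestronglyMeasurable]
  have h3 : (Set.univ.pi fun _ => Set.Ioc (0 : ℝ) (0 + 1)) =ᵐ[volume]
      Set.Icc (0 : Fin d → ℝ) (fun _ => 1) := by
    have := Measure.univ_pi_Ioc_ae_eq_Icc (μ := fun _ : Fin d => (volume : Measure ℝ))
      (f := 0) (g := fun _ => 1)
    rw [← volume_pi] at this
    simpa using this
  rw [h2, setIntegral_congr_set h3]
  have h4 := Measure.setIntegral_comp_smul (volume : Measure (Fin d → ℝ))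
    (fun ψ => F (rsPi d ψ)) (R := 2 * Real.pi) (Set.Icc (0 : Fin d → ℝ) (fun _ => 1)) (by positivity)
  have h5 : (2 * Real.pi) • Set.Icc (0 : Fin d → ℝ) (fun _ => 1)
      = Set.Icc (0 : Fin d → ℝ) (fun _ => 2 * Real.pi) := by
    ext x
    rw [Set.mem_smul_set_iff_inv_smul_mem₀ (by positivity)]
    simp only [Set.mem_Icc, Pi.le_def, Pi.smul_apply, smul_eq_mul, Pi.zero_apply]
    refine and_congr (forall_congr' fun i => ?_) (forall_congr' fun i => ?_)
    · rw [mul_nonneg_iff_of_pos_left (by positivity)]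
    · rw [inv_mul_le_iff₀ (by positivity), mul_one]
  rw [h5] at h4
  simp only [Module.finrank_fin_fun, smul_eq_mul] at h4
  rw [abs_of_pos (by positivity)] at h4
  rw [← h4]
  congr 1
  ext x
  congr 1
  ext i
  simp only [rsPi, Pi.smul_apply, smul_eq_mul]
  congr 1
  field_simp

/-- Translates of an analytic function depend analytically on the translation. -/
theorem rs_translate_analytic (d : ℕ) (f : (Fin d → ℝ) → ℝ)
    (hf : ∀ ψ : Fin d → ℝ, AnalyticAt ℝ f ψ)
    (hfper : ∀ (ψ : Fin d → ℝ) (i : Fin d), f (ψ + Pi.single i (2 * Real.pi)) = f ψ)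
    (F : C(UnitAddTorus (Fin d), ℝ)) (hF : ∀ ψ, F (rsPi d ψ) = f ψ) (ψ₀ : Fin d → ℝ) :
    AnalyticAt ℝ (fun ψ => rsTr d (rsPi d ψ) F) ψ₀ := by
  obtain ⟨r, hr, C, h⟩ := rs_compact_bound
    (isCompact_Icc (a := (0 : Fin d → ℝ)) (b := fun _ => 2 * Real.pi)) hf
  have hcd : ContDiff ℝ ⊤ f := by
    rw [contDiff_iff_contDiffAt]
    exact fun x => (hf x).contDiffAt
  have hc : ∀ k, Continuous (iteratedFDeriv ℝ k f) := fun k =>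
    hcd.continuous_iteratedFDeriv (by simp)
  have hq : ∀ k, ∃ H : C(UnitAddTorus (Fin d), (Fin d → ℝ) [×k]→L[ℝ] ℝ),
      ∀ ψ, H (rsPi d ψ) = (k ! : ℝ)⁻¹ • iteratedFDeriv ℝ k f ψ := by
    intro k
    refine rs_lift d _ (by have := hc k; fun_prop) fun ψ i => ?_
    rw [← iteratedFDeriv_comp_add_right k (Pi.single i (2 * Real.pi) : Fin d → ℝ)]
    congr 2
    ext χ
    exact hfper χ i
  choose q hq using hq
  -- analytic superposition
  have hbase : ∀ (v : C(UnitAddTorus (Fin d), Fin d → ℝ)),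
      Continuous (fun x => F (x + rsPi d (v x))) := by
    intro v
    have := rsPi_continuous d
    fun_prop
  have h1 := rs_superposition q r C hr
    (by
      intro k x
      obtain ⟨ψ, hψ, rfl⟩ := rsPi_surj_box d x
      rw [hq]
      exact (h ψ hψ).1 k)
    (fun v => ⟨_, hbase v⟩)
    (by
      intro v x hv
      obtain ⟨ψ, hψ, rfl⟩ := rsPi_surj_box d x
      have h2 := (h ψ hψ).2 _ hv
      simp only [hq, ContinuousMap.coe_mk, ← rsPi_add, hF]
      exact h2)
  -- constants
  let L : (Fin d → ℝ) →L[ℝ] C(UnitAddTorus (Fin d), Fin d → ℝ) :=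
    LinearMap.mkContinuous
      { toFun := fun y => ContinuousMap.const _ y
        map_add' := by intro a b; ext x; rfl
        map_smul' := by intro a b; ext x; rfl } 1 (by
          intro y
          rw [one_mul]
          exact (ContinuousMap.norm_le _ (norm_nonneg _)).2 fun x => le_rfl)
  have h3 : AnalyticAt ℝ (fun ψ => rsTr d (rsPi d ψ) F) 0 := by
    have := AnalyticAt.fun_comp (f := L) (x := (0 : Fin d → ℝ))
      (by rw [map_zero]; exact h1) (L.analyticAt 0)
    exact this
  have h4 : AnalyticAt ℝ (fun ψ => ψ - ψ₀) ψ₀ := analyticAt_id.sub analyticAt_const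
  have h5 := AnalyticAt.fun_comp (f := fun ψ => ψ - ψ₀) (x := ψ₀)
      (by rw [sub_self]; exact h3) h4
  have h6 := ((rsTr d (rsPi d ψ₀)).analyticAt _).fun_comp h5
  convert h6 using 1
  ext ψ x
  simp only [rsTr_apply, add_assoc]
  rw [← rsPi_add]
  simp

/-- `w'` is the derivative of `w` along the linear flow with direction `η`. -/
def RsFlow (d : ℕ) (η : Fin d → ℝ) (w w' : C(UnitAddTorus (Fin d), ℝ)) : Prop :=
  ∀ (x : UnitAddTorus (Fin d)) (s : ℝ),
    HasDerivAt (fun s : ℝ => w (x + rsPi d (s • η))) (w' (x + rsPi d (s • η))) s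

theorem rs_integrable (d : ℕ) (η : Fin d → ℝ) {μ : ℝ} (hμ : 0 < μ)
    (h : C(UnitAddTorus (Fin d), ℝ)) :
    Integrable (fun t : ℝ => Real.exp (-μ * t) • rsTr d (rsPi d (t • η)) h)
      (volume.restrict (Set.Ioi 0)) := by
  have h1 := (exp_neg_integrableOn_Ioi 0 hμ).mul_const ‖h‖
  refine h1.mono' ?_ ?_
  · refine Continuous.aestronglyMeasurable ?_
    have hc1 : Continuous (fun t : ℝ => Real.exp (-μ * t)) := by fun_prop
    have hc0 : Continuous (fun t : ℝ => t • η) := by fun_prop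
    have hc2 : Continuous (fun t : ℝ => rsTr d (rsPi d (t • η)) h) :=
      (rsTr_continuous d h).comp ((rsPi_continuous d).comp hc0)
    exact hc1.smul hc2
  · refine Eventually.of_forall fun t => ?_
    rw [norm_smul, Real.norm_eq_abs, Real.abs_exp]
    gcongr
    exact rsTr_norm d _ h

theorem rs_int_exp {μ : ℝ} (hμ : 0 < μ) : ∫ t in Set.Ioi (0 : ℝ), Real.exp (-μ * t) = 1 / μ := by
  rw [integral_exp_mul_Ioi (by linarith)]
  simp

theorem rs_resolvent_pos (d : ℕ) (η : Fin d → ℝ) {μ : ℝ} (hμ : 0 < μ) :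
    ∃ S : C(UnitAddTorus (Fin d), ℝ) →L[ℝ] C(UnitAddTorus (Fin d), ℝ),
      (∀ h, ‖S h‖ ≤ 1 / μ * ‖h‖) ∧ (∀ h, rsMean d (S h) = rsMean d h / μ) ∧
      (∀ θ h, rsTr d θ (S h) = S (rsTr d θ h)) ∧
      (∀ h, RsFlow d η (S h) (μ • S h - h)) := by
  have hbound : ∀ h : C(UnitAddTorus (Fin d), ℝ),
      ‖∫ t in Set.Ioi (0 : ℝ), Real.exp (-μ * t) • rsTr d (rsPi d (t • η)) h‖ ≤ 1 / μ * ‖h‖ := by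
    intro h
    have h1 := (exp_neg_integrableOn_Ioi 0 hμ).mul_const ‖h‖
    refine (norm_integral_le_of_norm_le h1 (Eventually.of_forall fun t => ?_)).trans ?_
    · rw [norm_smul, Real.norm_eq_abs, Real.abs_exp]
      gcongr
      exact rsTr_norm d _ h
    · rw [integral_mul_const, rs_int_exp hμ]
  let S : C(UnitAddTorus (Fin d), ℝ) →L[ℝ] C(UnitAddTorus (Fin d), ℝ) :=
    LinearMap.mkContinuous
      { toFun := fun h => ∫ t in Set.Ioi (0 : ℝ), Real.exp (-μ * t) • rsTr d (rsPi d (t • η)) h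
        map_add' := by
          intro F G
          simp only [map_add, smul_add]
          exact integral_add (rs_integrable d η hμ F) (rs_integrable d η hμ G)
        map_smul' := by
          intro c F
          simp only [map_smul, RingHom.id_apply]
          rw [← integral_smul]
          simp only [smul_comm c] } (1 / μ) hbound
  have hS : ∀ h, S h = ∫ t in Set.Ioi (0 : ℝ), Real.exp (-μ * t) • rsTr d (rsPi d (t • η)) h :=
    fun _ => rfl
  have hcomm : ∀ {G : Type} [NormedAddCommGroup G] [NormedSpace ℝ G] [CompleteSpace G]
      (L : C(UnitAddTorus (Fin d), ℝ) →L[ℝ] G) (h : C(UnitAddTorus (Fin d), ℝ)),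
      L (S h) = ∫ t in Set.Ioi (0 : ℝ), Real.exp (-μ * t) • L (rsTr d (rsPi d (t • η)) h) := by
    intro G _ _ _ L h
    rw [hS, ← L.integral_comp_comm (rs_integrable d η hμ h)]
    simp only [map_smul]
  refine ⟨S, hbound, ?_, ?_, ?_⟩
  · intro h
    rw [hcomm (rsMean d)]
    simp only [rsMean_tr, smul_eq_mul]
    rw [integral_mul_const, rs_int_exp hμ]
    ring
  · intro θ h
    rw [hcomm (rsTr d θ), hS]
    congr 1
    ext t : 1
    congr 1
    ext x
    simp only [rsTr_apply]
    congr 1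
    abel
  · intro h x s
    set H : ℝ → ℝ := fun r => h (x + rsPi d (r • η)) with hH
    have hHc : Continuous H := by
      have := rsPi_continuous d
      fun_prop
    have hev : ∀ y, S h y = ∫ t in Set.Ioi (0 : ℝ), Real.exp (-μ * t) * h (y + rsPi d (t • η)) := by
      intro y
      exact hcomm (ContinuousMap.evalCLM ℝ y) h
    have hintg : ∀ a, IntegrableOn (fun r => Real.exp (-μ * r) * H r) (Set.Ioi a) := by
      intro a
      have h1 := (exp_neg_integrableOn_Ioi a hμ).mul_const ‖h‖
      refine h1.mono' (Continuous.aestronglyMeasurable (by fun_prop)) ?_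
      refine Eventually.of_forall fun t => ?_
      rw [norm_mul, Real.norm_eq_abs (Real.exp _), Real.abs_exp]
      gcongr
      exact h.norm_coe_le_norm _
    have hshift : ∀ s, S h (x + rsPi d (s • η)) =
        Real.exp (μ * s) * ∫ r in Set.Ioi s, Real.exp (-μ * r) * H r := by
      intro s
      rw [hev, ← integral_const_mul]
      have hmp := (measurePreserving_add_right (volume : Measure ℝ) s).setIntegral_preimage_emb
        (measurableEmbedding_addRight s)
        (fun r => Real.exp (μ * s) * (Real.exp (-μ * r) * H r)) (Set.Ioi s)
      rw [← hmp]
      have : (fun t : ℝ => t + s) ⁻¹' Set.Ioi s = Set.Ioi 0 := by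
        ext t; simp
      rw [this]
      congr 1
      ext t
      rw [← mul_assoc, ← Real.exp_add, hH]
      simp only
      rw [add_smul, rsPi_add]
      have e1 : x + (rsPi d (t • η) + rsPi d (s • η)) = x + rsPi d (s • η) + rsPi d (t • η) := by
        abel
      have e2 : μ * s + -μ * (t + s) = -μ * t := by ring
      rw [e1, e2]
    have hsplit : ∀ s, ∫ r in Set.Ioi s, Real.exp (-μ * r) * H r =
        (∫ r in Set.Ioi (0 : ℝ), Real.exp (-μ * r) * H r)
          - ∫ r in (0 : ℝ)..s, Real.exp (-μ * r) * H r := by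
      intro s
      rw [← intervalIntegral.integral_Ioi_sub_Ioi' (hintg 0) (hintg s)]
      ring
    have hk : Continuous (fun r => Real.exp (-μ * r) * H r) := by fun_prop
    have hd1 : HasDerivAt (fun s => ∫ r in (0 : ℝ)..s, Real.exp (-μ * r) * H r)
        (Real.exp (-μ * s) * H s) s :=
      (Continuous.integral_hasStrictDerivAt hk 0 s).hasDerivAt
    have hd2 : HasDerivAt (fun s => Real.exp (μ * s)) (Real.exp (μ * s) * (μ * 1)) s :=
      ((hasDerivAt_id s).const_mul μ).exp
    have hd3 := hd2.mul (hd1.const_sub (∫ r in Set.Ioi (0 : ℝ), Real.exp (-μ * r) * H r))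
    have hfun : (fun s : ℝ => S h (x + rsPi d (s • η))) =
        fun s => Real.exp (μ * s) * ((∫ r in Set.Ioi (0 : ℝ), Real.exp (-μ * r) * H r)
          - ∫ r in (0 : ℝ)..s, Real.exp (-μ * r) * H r) := by
      ext s
      rw [hshift, hsplit]
    rw [hfun]
    refine HasDerivAt.congr_deriv hd3 (Eq.symm ?_)
    have he : Real.exp (μ * s) * Real.exp (-μ * s) = 1 := by
      rw [← Real.exp_add]; simp
    change μ * S h (x + rsPi d (s • η)) - H s = _
    rw [hshift, hsplit]
    linear_combination (H s) * he

/-- The inverse of `∂_ω - l`. -/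
theorem rs_resolvent (d : ℕ) (η : Fin d → ℝ) {l : ℝ} (hl : l ≠ 0) :
    ∃ S : C(UnitAddTorus (Fin d), ℝ) →L[ℝ] C(UnitAddTorus (Fin d), ℝ),
      (∀ h, ‖S h‖ ≤ 1 / |l| * ‖h‖) ∧ (∀ h, rsMean d (S h) = - rsMean d h / l) ∧
      (∀ θ h, rsTr d θ (S h) = S (rsTr d θ h)) ∧
      (∀ h, RsFlow d η (S h) (l • S h + h)) := by
  rcases lt_or_gt_of_ne hl with h | h
  · obtain ⟨S, h1, h2, h3, h4⟩ := rs_resolvent_pos d (-η) (μ := -l) (by linarith)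
    refine ⟨S, ?_, ?_, h3, ?_⟩
    · rw [abs_of_neg h]; exact h1
    · intro g; rw [h2, div_neg, neg_div]
    · intro g x s
      have h5 := (h4 g x (-s)).comp_of_eq s (hasDerivAt_neg s) rfl
      simp only [Function.comp_def, neg_smul, smul_neg, neg_neg] at h5
      refine HasDerivAt.congr_deriv h5 (Eq.symm ?_)
      change l * S g (x + rsPi d (s • η)) + g (x + rsPi d (s • η)) =
        (-(l * S g (x + rsPi d (s • η))) - g (x + rsPi d (s • η))) * (-1)
      ring
  · obtain ⟨S, h1, h2, h3, h4⟩ := rs_resolvent_pos d η h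
    refine ⟨-S, ?_, ?_, ?_, ?_⟩
    · intro g; rw [abs_of_pos h, neg_apply, norm_neg]; exact h1 g
    · intro g; rw [neg_apply, map_neg, h2, neg_div]
    · intro θ g; simp only [neg_apply, map_neg, h3]
    · intro g x s
      have h5 := (h4 g x s).neg
      refine HasDerivAt.congr_deriv h5 (Eq.symm ?_)
      change l * (- S g (x + rsPi d (s • η))) + g (x + rsPi d (s • η)) =
        - (l * S g (x + rsPi d (s • η)) - g (x + rsPi d (s • η)))
      ring

/-- Bounded solutions of `z' = l z` vanish. -/
theorem rs_unique (d : ℕ) (η : Fin d → ℝ) {l : ℝ} (hl : l ≠ 0)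
    (z : C(UnitAddTorus (Fin d), ℝ)) (hz : RsFlow d η z (l • z)) : z = 0 := by
  ext x
  set y : ℝ → ℝ := fun s => z (x + rsPi d (s • η)) with hy
  have hb : ∀ s, |y s| ≤ ‖z‖ := fun s => z.norm_coe_le_norm _
  have hd : ∀ s, HasDerivAt (fun s => Real.exp (-l * s) * y s) 0 s := by
    intro s
    have hd2 : HasDerivAt (fun s => Real.exp (-l * s)) (Real.exp (-l * s) * (-l * 1)) s :=
      ((hasDerivAt_id s).const_mul (-l)).exp
    have hd3 := hd2.mul (hz x s)
    refine HasDerivAt.congr_deriv hd3 (Eq.symm ?_)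
    change 0 = Real.exp (-l * s) * (-l * 1) * z (x + rsPi d (s • η)) +
      Real.exp (-l * s) * (l * z (x + rsPi d (s • η)))
    ring
  have hconst : ∀ s, Real.exp (-l * s) * y s = y 0 := by
    intro s
    have := is_const_of_deriv_eq_zero (fun s => (hd s).differentiableAt) (fun s => (hd s).deriv) s 0
    simpa using this
  have hy0 : y 0 = z x := by simp [hy, rsPi_zero]
  have h1 : ∀ n : ℕ, |y 0| * (1 + n) ≤ ‖z‖ := by
    intro n
    have h2 := hconst ((n : ℝ) / l)
    have h3 : -l * ((n : ℝ) / l) = -n := by field_simp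
    rw [h3] at h2
    rw [← h2, abs_mul, Real.abs_exp]
    have h4 : Real.exp (-(n : ℝ)) * (1 + n) ≤ 1 := by
      have h5 := Real.add_one_le_exp (n : ℝ)
      have h6 : Real.exp (-(n : ℝ)) * Real.exp n = 1 := by rw [← Real.exp_add]; simp
      have h7 := Real.exp_pos (-(n : ℝ))
      nlinarith
    calc Real.exp (-(n : ℝ)) * |y (n / l)| * (1 + n)
        = (Real.exp (-(n : ℝ)) * (1 + n)) * |y (n / l)| := by ring
      _ ≤ 1 * |y (n / l)| := by gcongr
      _ ≤ ‖z‖ := by rw [one_mul]; exact hb _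
  rw [← hy0]
  change y 0 = 0
  by_contra hne
  have hpos : 0 < |y 0| := abs_pos.mpr hne
  obtain ⟨n, hn⟩ := exists_nat_gt (‖z‖ / |y 0|)
  have h2 := h1 n
  rw [div_lt_iff₀ hpos] at hn
  nlinarith

/-- The resolvent applied to a derivative. -/
theorem rs_S_deriv (d : ℕ) (η : Fin d → ℝ) {l : ℝ} (hl : l ≠ 0)
    (S : C(UnitAddTorus (Fin d), ℝ) →L[ℝ] C(UnitAddTorus (Fin d), ℝ))
    (hS : ∀ h, RsFlow d η (S h) (l • S h + h)) (w w' : C(UnitAddTorus (Fin d), ℝ))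
    (hw : RsFlow d η w w') : S w' = w + l • S w := by
  have h1 : S w' - w - l • S w = 0 := by
    refine rs_unique d η hl _ ?_
    intro x s
    have h2 := ((hS w' x s).sub (hw x s)).sub ((hS w x s).const_mul l)
    refine HasDerivAt.congr_deriv h2 (Eq.symm ?_)
    change l * (S w' (x + rsPi d (s • η)) - w (x + rsPi d (s • η))
        - l * S w (x + rsPi d (s • η))) =
      (l * S w' (x + rsPi d (s • η)) + w' (x + rsPi d (s • η))) - w' (x + rsPi d (s • η))
        - l * (l * S w (x + rsPi d (s • η)) + w (x + rsPi d (s • η)))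
    ring
  have h3 : S w' = (S w' - w - l • S w) + (w + l • S w) := by abel
  rw [h3, h1, zero_add]

theorem rs_mean_deriv (d : ℕ) (η : Fin d → ℝ) (w w' : C(UnitAddTorus (Fin d), ℝ))
    (hw : RsFlow d η w w') : rsMean d w' = 0 := by
  obtain ⟨S, _, h2, _, h4⟩ := rs_resolvent d η (l := 1) one_ne_zero
  have h5 := h2 w'
  rw [rs_S_deriv d η one_ne_zero S h4 w w' hw, map_add, map_smul, h2] at h5
  simp at h5
  linarith

theorem rs_mFourier_flow (d : ℕ) (η : Fin d → ℝ) (ν : Fin d → ℤ) (x : UnitAddTorus (Fin d)) (s : ℝ) :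
    UnitAddTorus.mFourier ν (x + rsPi d (s • η)) =
      UnitAddTorus.mFourier ν x * Complex.exp ((s : ℂ) * (Complex.I * ((∑ i, η i * (ν i : ℝ) : ℝ) : ℂ))) := by
  have h1 : ∀ i, fourier (ν i) ((x + rsPi d (s • η)) i) =
      fourier (ν i) (x i) * Complex.exp ((s : ℂ) * (Complex.I * ((η i * (ν i : ℝ) : ℝ) : ℂ))) := by
    intro i
    have h2 : fourier (ν i) ((x + rsPi d (s • η)) i) =
        fourier (ν i) (x i) * fourier (ν i) (rsPi d (s • η) i) := by
      rw [Pi.add_apply, fourier_apply, smul_add, AddCircle.toCircle_add, Circle.coe_mul,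
        fourier_apply, fourier_apply]
    rw [h2]
    congr 1
    unfold rsPi
    rw [fourier_coe_apply]
    congr 1
    have hpi : (Real.pi : ℂ) ≠ 0 := by exact_mod_cast Real.pi_ne_zero
    simp only [Pi.smul_apply, smul_eq_mul]
    push_cast
    field_simp
  change ∏ i, fourier (ν i) ((x + rsPi d (s • η)) i) = (∏ i, fourier (ν i) (x i)) * _
  rw [Finset.prod_congr rfl (fun i _ => h1 i), Finset.prod_mul_distrib, ← Complex.exp_sum]
  congr 2
  push_cast
  rw [Finset.mul_sum, Finset.mul_sum]

theorem rs_density (d : ℕ) (η : Fin d → ℝ)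
    (hη : ∀ ν : Fin d → ℤ, ν ≠ 0 → (∑ i, η i * (ν i : ℝ)) ≠ 0)
    (F : C(UnitAddTorus (Fin d), ℝ)) {δ : ℝ} (hδ : 0 < δ) :
    ∃ (c : ℝ) (w w' : C(UnitAddTorus (Fin d), ℝ)), RsFlow d η w w' ∧
      ‖F - ContinuousMap.const _ c - w'‖ ≤ δ := by
  -- trigonometric polynomials are constants plus derivatives
  have hspan : ∀ p ∈ Submodule.span ℂ (Set.range (UnitAddTorus.mFourier (d := Fin d))),
      ∃ (c : ℂ) (W W' : C(UnitAddTorus (Fin d), ℂ)),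
        (∀ (x : UnitAddTorus (Fin d)) (s : ℝ),
          HasDerivAt (fun s : ℝ => W (x + rsPi d (s • η))) (W' (x + rsPi d (s • η))) s) ∧
        ∀ x, p x = c + W' x := by
    intro p hp
    induction hp using Submodule.span_induction with
    | mem p hp =>
      obtain ⟨ν, rfl⟩ := hp
      by_cases hν : ν = 0
      · refine ⟨1, 0, 0, fun x s => hasDerivAt_const s (0 : ℂ), fun x => ?_⟩
        rw [hν, UnitAddTorus.mFourier_zero]
        change (1 : ℂ) = 1 + 0
        simp
      · set k : ℂ := Complex.I * ((∑ i, η i * (ν i : ℝ) : ℝ) : ℂ) with hk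
        have hk0 : k ≠ 0 := mul_ne_zero Complex.I_ne_zero (by exact_mod_cast hη ν hν)
        refine ⟨0, k⁻¹ • UnitAddTorus.mFourier ν, UnitAddTorus.mFourier ν, fun x s => ?_,
          fun x => by simp⟩
        have h1 : HasDerivAt (fun s : ℝ => Complex.exp ((s : ℂ) * k))
            (Complex.exp ((s : ℂ) * k) * (1 * k)) s :=
          (((hasDerivAt_id (s : ℂ)).mul_const k).cexp).comp_ofReal
        have h2 := (h1.const_mul (UnitAddTorus.mFourier ν x)).const_mul k⁻¹
        have h3 : (fun s : ℝ => (k⁻¹ • UnitAddTorus.mFourier ν) (x + rsPi d (s • η))) =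
            fun s : ℝ => k⁻¹ * (UnitAddTorus.mFourier ν x * Complex.exp ((s : ℂ) * k)) := by
          ext s
          change k⁻¹ * UnitAddTorus.mFourier ν (x + rsPi d (s • η)) = _
          rw [rs_mFourier_flow]
        rw [h3]
        refine h2.congr_deriv ?_
        rw [rs_mFourier_flow, ← hk]
        field_simp
    | zero => exact ⟨0, 0, 0, fun x s => hasDerivAt_const s (0 : ℂ), fun x => by simp⟩
    | add p q _ _ hp hq =>
      obtain ⟨c, W, W', h1, h2⟩ := hp
      obtain ⟨e, V, V', h3, h4⟩ := hq
      refine ⟨c + e, W + V, W' + V', fun x s => (h1 x s).add (h3 x s), fun x => ?_⟩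
      change p x + q x = c + e + (W' x + V' x)
      rw [h2, h4]
      ring
    | smul b p _ hp =>
      obtain ⟨c, W, W', h1, h2⟩ := hp
      refine ⟨b * c, b • W, b • W', fun x s => (h1 x s).const_mul b, fun x => ?_⟩
      change b * p x = b * c + b * W' x
      rw [h2]
      ring
  let Fc : C(UnitAddTorus (Fin d), ℂ) := ⟨fun x => (F x : ℂ), by fun_prop⟩
  have hmem : Fc ∈ (Submodule.span ℂ
      (Set.range (UnitAddTorus.mFourier (d := Fin d)))).topologicalClosure := by
    rw [UnitAddTorus.span_mFourier_closure_eq_top]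
    exact Submodule.mem_top
  rw [← SetLike.mem_coe, Submodule.topologicalClosure_coe, Metric.mem_closure_iff] at hmem
  obtain ⟨p, hp, hpd⟩ := hmem δ hδ
  obtain ⟨c, W, W', h1, h2⟩ := hspan p hp
  refine ⟨c.re, ⟨fun x => (W x).re, by fun_prop⟩, ⟨fun x => (W' x).re, by fun_prop⟩, ?_, ?_⟩
  · intro x s
    exact Complex.reCLM.hasFDerivAt.comp_hasDerivAt s (h1 x s)
  · rw [ContinuousMap.norm_le _ hδ.le]
    intro x
    have h3 : F x - c.re - (W' x).re = (Fc x - p x).re := by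
      rw [h2]
      change _ = ((F x : ℂ) - (c + W' x)).re
      simp
      ring
    change |F x - c.re - (W' x).re| ≤ δ
    rw [h3]
    refine (Complex.abs_re_le_norm _).trans ?_
    rw [dist_eq_norm] at hpd
    exact ((Fc - p).norm_coe_le_norm x).trans hpd.le

/-- Analyticity of solutions of `v + B v = k ψ` with `B` a strict contraction. -/
theorem rs_analytic_solve {X E : Type*} [NormedAddCommGroup X] [NormedSpace ℝ X]
    [NormedAddCommGroup E] [NormedSpace ℝ E] [CompleteSpace E]
    (B : E → E) (v : X → E) (k : X → E) (x₀ : X)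
    (hB : AnalyticAt ℝ B (v x₀)) (hv : ContinuousAt v x₀) (hk : AnalyticAt ℝ k x₀)
    (hlip : ∀ᶠ y in 𝓝 (v x₀), ‖B y - B (v x₀)‖ ≤ 1 / 4 * ‖y - v x₀‖)
    (heq : ∀ x, v x + B (v x) = k x) : AnalyticAt ℝ v x₀ := by
  have hBd := hB.differentiableAt.hasFDerivAt
  have hn : ‖fderiv ℝ B (v x₀)‖ ≤ 1 / 4 := hBd.le_of_lip' (by norm_num) hlip
  have hn1 : ‖-fderiv ℝ B (v x₀)‖ < 1 := by rw [norm_neg]; linarith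
  let U : (E →L[ℝ] E)ˣ := Units.oneSub _ hn1
  let e : E ≃L[ℝ] E := ContinuousLinearEquiv.unitsEquiv ℝ E U
  have hG : AnalyticAt ℝ (fun y => y + B y) (v x₀) := analyticAt_id.add hB
  have he : (e : E →L[ℝ] E) = ContinuousLinearMap.id ℝ E + fderiv ℝ B (v x₀) := by
    ext y
    change (1 - (-fderiv ℝ B (v x₀))) y = _
    simp
  have hGd : HasFDerivAt (fun y => y + B y) (e : E →L[ℝ] E) (v x₀) := by
    rw [he]
    exact (hasFDerivAt_id _).add hBd
  have hGc : ContDiffAt ℝ (⊤ : WithTop ℕ∞) (fun y => y + B y) (v x₀) := hG.contDiffAt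
  have hinv := hGc.to_localInverse hGd (by simp)
  have hinvA : AnalyticAt ℝ (hGc.localInverse hGd (by simp)) (v x₀ + B (v x₀)) :=
    analyticWithinAt_univ.mp (contDiffWithinAt_omega_iff_analyticWithinAt.mp hinv)
  have hst := hGc.hasStrictFDerivAt' hGd (by simp)
  have hleft : ∀ᶠ y in 𝓝 (v x₀), hGc.localInverse hGd (by simp) (y + B y) = y :=
    hst.eventually_left_inverse
  have h2 : ∀ᶠ x in 𝓝 x₀, hGc.localInverse hGd (by simp) (k x) = v x := by
    filter_upwards [hv.eventually hleft] with x hx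
    rw [← heq x]
    exact hx
  refine AnalyticAt.congr ?_ h2
  refine AnalyticAt.comp ?_ hk
  rw [← heq x₀]
  exact hinvA

/-- The solution operator of the linearised range equation. -/
theorem rs_operator (d : ℕ) (η : Fin d → ℝ) {a ε : ℝ} (ha : a ≠ 0) (hε : ε ≠ 0)
    (hsm : 4 * |a| * ε ^ 2 ≤ 1) :
    ∃ T : C(UnitAddTorus (Fin d), ℝ) →L[ℝ] C(UnitAddTorus (Fin d), ℝ),
      (∀ h, ‖T h‖ ≤ 2 / |a| * ‖h‖) ∧ (∀ h, rsMean d (T h) = 0) ∧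
      (∀ θ h, rsTr d θ (T h) = T (rsTr d θ h)) ∧
      (∀ w w', RsFlow d η w w' → ‖T w'‖ ≤ 4 * |ε| * ‖w‖) ∧
      (∀ c : ℝ, T (ContinuousMap.const _ c) = 0) ∧
      (∀ h, ∃ ud udd, RsFlow d η (T h) ud ∧ RsFlow d η ud udd ∧
        ∀ x, ε * udd x + ud x + ε * (a * T h x) = ε * (h x - rsMean d h)) := by
  set r : ℝ := Real.sqrt (1 - 4 * a * ε ^ 2) with hr
  have hr0 : 0 ≤ r := Real.sqrt_nonneg _
  have hr2 : r ^ 2 = 1 - 4 * a * ε ^ 2 := by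
    refine Real.sq_sqrt ?_
    have := le_abs_self a
    nlinarith [sq_nonneg ε]
  obtain ⟨l, hl⟩ : ∃ l : ℝ, l = -(1 + r) / (2 * ε) := ⟨_, rfl⟩
  have habs : |l| * (2 * |ε|) = 1 + r := by
    rw [hl, abs_div, abs_neg, abs_of_nonneg (by linarith : 0 ≤ 1 + r), abs_mul, abs_two]
    have := abs_pos.mpr hε
    field_simp
  have hεp := abs_pos.mpr hε
  have hl0 : l ≠ 0 := by
    intro h
    rw [h] at habs
    simp at habs
    linarith
  have hlp := abs_pos.mpr hl0
  have hinv : 1 / |l| ≤ 2 * |ε| := by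
    rw [div_le_iff₀ hlp]
    linarith
  obtain ⟨m, hm⟩ : ∃ m : ℝ, m = a / l := ⟨_, rfl⟩
  have hm0 : m ≠ 0 := by rw [hm]; exact div_ne_zero ha hl0
  have hlm : l * m = a := by rw [hm]; field_simp
  have hsum : ε * (l + m) = -1 := by
    have hlε : l * (2 * ε) = -(1 + r) := by rw [hl]; field_simp
    have h1 : (l * ε) ^ 2 + l * ε + a * ε ^ 2 = 0 := by
      have : l * ε = -(1 + r) / 2 := by linarith
      rw [this]
      linear_combination (1 / 4) * hr2
    have h2 : l * (ε * (l + m) + 1) * ε = 0 := by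
      have : l * (ε * (l + m) + 1) * ε = (l * ε) ^ 2 + l * ε + (l * m) * ε ^ 2 := by ring
      rw [this, hlm, h1]
    have h3 : ε * (l + m) + 1 = 0 := by
      rcases mul_eq_zero.mp h2 with h | h
      · rcases mul_eq_zero.mp h with h | h
        · exact absurd h hl0
        · exact h
      · exact absurd h hε
    linarith
  obtain ⟨S1, s11, s12, s13, s14⟩ := rs_resolvent d η hl0
  obtain ⟨S2, s21, s22, s23, s24⟩ := rs_resolvent d η hm0
  have hmp := abs_pos.mpr hm0
  have hap := abs_pos.mpr ha
  obtain ⟨P, hP⟩ : ∃ P : C(UnitAddTorus (Fin d), ℝ) →L[ℝ] C(UnitAddTorus (Fin d), ℝ),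
      ∀ h, P h = h - ContinuousMap.const _ (rsMean d h) := by
    refine ⟨ContinuousLinearMap.id ℝ _ - (rsMean d).smulRight (1 : C(UnitAddTorus (Fin d), ℝ)),
      fun h => ?_⟩
    ext x
    change h x - rsMean d h * 1 = h x - rsMean d h
    rw [mul_one]
  have hPm : ∀ h, rsMean d (P h) = 0 := by
    intro h
    rw [hP, map_sub, rsMean_const, sub_self]
  have hPn : ∀ h, ‖P h‖ ≤ 2 * ‖h‖ := by
    intro h
    rw [hP]
    refine (norm_sub_le _ _).trans ?_
    have : ‖(ContinuousMap.const (UnitAddTorus (Fin d)) (rsMean d h))‖ ≤ ‖h‖ := by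
      rw [ContinuousMap.norm_le _ (norm_nonneg _)]
      intro x
      exact rsMean_norm d h
    linarith
  have hPt : ∀ θ h, rsTr d θ (P h) = P (rsTr d θ h) := by
    intro θ h
    rw [hP, hP, map_sub, rsMean_tr]
    congr 1
  have hnL : ∀ h, ‖S1 (S2 h)‖ ≤ 1 / |a| * ‖h‖ := by
    intro h
    calc ‖S1 (S2 h)‖ ≤ 1 / |l| * (1 / |m| * ‖h‖) :=
          (s11 _).trans (mul_le_mul_of_nonneg_left (s21 h) (by positivity))
      _ = 1 / |a| * ‖h‖ := by
          rw [← hlm, abs_mul]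
          field_simp
  refine ⟨S1.comp (S2.comp P), ?_, ?_, ?_, ?_, ?_, ?_⟩
  · intro h
    calc ‖S1 (S2 (P h))‖ ≤ 1 / |a| * ‖P h‖ := hnL _
      _ ≤ 1 / |a| * (2 * ‖h‖) := mul_le_mul_of_nonneg_left (hPn h) (by positivity)
      _ = 2 / |a| * ‖h‖ := by ring
  · intro h
    change rsMean d (S1 (S2 (P h))) = 0
    rw [s12, s22, hPm]
    simp
  · intro θ h
    change rsTr d θ (S1 (S2 (P h))) = S1 (S2 (P (rsTr d θ h)))
    rw [s13, s23, hPt]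
  · intro w w' hw
    change ‖S1 (S2 (P w'))‖ ≤ _
    have h0 : P w' = w' := by
      rw [hP, rs_mean_deriv d η w w' hw]
      ext x
      change w' x - 0 = w' x
      rw [sub_zero]
    rw [h0, rs_S_deriv d η hm0 S2 s24 w w' hw]
    have h1 : ‖w + m • S2 w‖ ≤ 2 * ‖w‖ := by
      refine (norm_add_le _ _).trans ?_
      rw [norm_smul, Real.norm_eq_abs]
      have h2 : |m| * ‖S2 w‖ ≤ |m| * (1 / |m| * ‖w‖) :=
        mul_le_mul_of_nonneg_left (s21 w) (abs_nonneg _)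
      have h3 : |m| * (1 / |m| * ‖w‖) = ‖w‖ := by field_simp
      linarith
    calc ‖S1 (w + m • S2 w)‖ ≤ 1 / |l| * ‖w + m • S2 w‖ := s11 _
      _ ≤ (2 * |ε|) * (2 * ‖w‖) := mul_le_mul hinv h1 (norm_nonneg _) (by positivity)
      _ = 4 * |ε| * ‖w‖ := by ring
  · intro c
    change S1 (S2 (P (ContinuousMap.const _ c))) = 0
    rw [hP, rsMean_const, sub_self, map_zero, map_zero]
  · intro h
    refine ⟨l • S1 (S2 (P h)) + S2 (P h),
      l • (l • S1 (S2 (P h)) + S2 (P h)) + (m • S2 (P h) + P h), s14 _, ?_, ?_⟩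
    · intro x s
      exact ((s14 (S2 (P h)) x s).const_mul l).add (s24 (P h) x s)
    · intro x
      have h1 : P h x = h x - rsMean d h := by rw [hP]; rfl
      change ε * (l * (l * S1 (S2 (P h)) x + S2 (P h) x) + (m * S2 (P h) x + P h x))
        + (l * S1 (S2 (P h)) x + S2 (P h) x) + ε * (a * S1 (S2 (P h)) x) = _
      rw [h1, ← hlm]
      linear_combination (l * S1 (S2 (P h)) x + S2 (P h) x) * hsum

/-- **Solvability of the range equation.**
For nonresonant `ω`, analytic periodic `f` with mean `f₀`, analytic `g` with `g(c₀) = f₀`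
and `a := g'(c₀) ≠ 0`, there are `ε̄, ζ̄ > 0` such that for every `0 < |ε| < ε̄` and every
`|ζ| < ζ̄` there exist a real analytic, periodic, zero-mean function `u` and a constant `R`
such that `x(t) = c₀ + ζ + u(ωt)` satisfies
`ε x'' + x' + ε g(x) = ε f(ωt) + ε R` for all `t`. -/
theorem range_equation_solvable
    (d : ℕ) (hd : 1 ≤ d) (ω : Fin d → ℝ)
    (hω : ∀ ν : Fin d → ℤ, ν ≠ 0 → (∑ i, ω i * (ν i : ℝ)) ≠ 0)
    (f : (Fin d → ℝ) → ℝ) (g : ℝ → ℝ)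
    (hf : ∀ ψ : Fin d → ℝ, AnalyticAt ℝ f ψ)
    (hfper : ∀ (ψ : Fin d → ℝ) (i : Fin d), f (ψ + Pi.single i (2 * Real.pi)) = f ψ)
    (hg : ∀ x : ℝ, AnalyticAt ℝ g x)
    (f₀ : ℝ)
    (hf₀ : f₀ = ((2 * Real.pi) ^ d)⁻¹ *
      ∫ ψ in Set.Icc (0 : Fin d → ℝ) (fun _ => 2 * Real.pi), f ψ)
    (c₀ : ℝ) (hzero : g c₀ = f₀) (ha : deriv g c₀ ≠ 0) :
    ∃ εb > (0 : ℝ), ∃ ζb > (0 : ℝ),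
      ∀ ε : ℝ, 0 < |ε| → |ε| < εb → ∀ ζ : ℝ, |ζ| < ζb →
        ∃ (u : (Fin d → ℝ) → ℝ) (R : ℝ),
          (∀ ψ : Fin d → ℝ, AnalyticAt ℝ u ψ) ∧
          (∀ (ψ : Fin d → ℝ) (i : Fin d), u (ψ + Pi.single i (2 * Real.pi)) = u ψ) ∧
          (((2 * Real.pi) ^ d)⁻¹ *
            ∫ ψ in Set.Icc (0 : Fin d → ℝ) (fun _ => 2 * Real.pi), u ψ) = 0 ∧
          (∀ t : ℝ,
            ε * deriv (deriv (fun s : ℝ => c₀ + ζ + u (s • ω))) t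
              + deriv (fun s : ℝ => c₀ + ζ + u (s • ω)) t
              + ε * g (c₀ + ζ + u (t • ω))
              = ε * f (t • ω) + ε * R) := by
  set a : ℝ := deriv g c₀ with ha_def
  have hap : 0 < |a| := abs_pos.mpr ha
  have hfc : Continuous f := continuous_iff_continuousAt.mpr fun ψ => (hf ψ).continuousAt
  obtain ⟨F, hF⟩ := rs_lift d f hfc hfper
  -- the nonlinear remainder
  obtain ⟨Q, hQdef⟩ : ∃ Q : ℝ → ℝ, Q = fun y => g (c₀ + y) - g c₀ - a * y := ⟨_, rfl⟩
  have hQan : ∀ y, AnalyticAt ℝ Q y := by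
    intro y
    rw [hQdef]
    have h1 : AnalyticAt ℝ (fun y : ℝ => c₀ + y) y := analyticAt_const.add analyticAt_id
    exact (((hg (c₀ + y)).comp h1).sub analyticAt_const).sub (analyticAt_const.mul analyticAt_id)
  have hQ0 : Q 0 = 0 := by rw [hQdef]; simp
  obtain ⟨ρ, hρ, hQlip⟩ : ∃ ρ > (0 : ℝ), ∀ y y', |y| ≤ 3 * ρ → |y'| ≤ 3 * ρ →
      |Q y - Q y'| ≤ |a| / 8 * |y - y'| := by
    have h1 : HasStrictDerivAt g a c₀ := (hg c₀).hasStrictDerivAt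
    have h2 := h1.hasStrictFDerivAt.isLittleO.def (show 0 < |a| / 8 by positivity)
    rw [nhds_prod_eq, Metric.nhds_basis_ball.prod_self.eventually_iff] at h2
    obtain ⟨r, hr, h3⟩ := h2
    refine ⟨r / 6, by positivity, fun y y' hy hy' => ?_⟩
    have h4 := h3 (x := (c₀ + y, c₀ + y')) ⟨by
        rw [Metric.mem_ball, Real.dist_eq, add_sub_cancel_left]; linarith, by
        rw [Metric.mem_ball, Real.dist_eq, add_sub_cancel_left]; linarith⟩
    simp only [Real.norm_eq_abs, ContinuousLinearMap.toSpanSingleton_apply, smul_eq_mul] at h4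
    rw [hQdef]
    convert h4 using 2
    · ring
    · congr 1
      ring
  -- approximation of the forcing
  obtain ⟨c, w, w', hww, hδ⟩ := rs_density d ω hω F (δ := |a| * ρ / 8) (by positivity)
  set M : ℝ := ‖w‖ with hM
  have hM0 : 0 ≤ M := norm_nonneg _
  refine ⟨min (min 1 (1 / (4 * |a|))) (ρ / (16 * (M + 1))), by positivity, ρ, hρ, ?_⟩
  intro ε hε0 hεb ζ hζ
  have hε : ε ≠ 0 := abs_pos.mp hε0
  have hε1 : |ε| < 1 := hεb.trans_le ((min_le_left _ _).trans (min_le_left _ _))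
  have hε2 : |ε| < 1 / (4 * |a|) := hεb.trans_le ((min_le_left _ _).trans (min_le_right _ _))
  have hε3 : |ε| < ρ / (16 * (M + 1)) := hεb.trans_le (min_le_right _ _)
  have hsm : 4 * |a| * ε ^ 2 ≤ 1 := by
    rw [lt_div_iff₀ (by positivity)] at hε2
    rw [← sq_abs]
    nlinarith
  obtain ⟨T, T1, T2, T3, T4, T5, T6⟩ := rs_operator d ω ha hε hsm
  have hTF : ‖T F‖ ≤ ρ / 2 := by
    have h1 : T F = T (F - ContinuousMap.const _ c - w') + T w' := by
      rw [map_sub, map_sub, T5]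
      abel
    have h2 : ‖T (F - ContinuousMap.const _ c - w')‖ ≤ ρ / 4 := by
      refine (T1 _).trans ?_
      calc 2 / |a| * ‖F - ContinuousMap.const _ c - w'‖ ≤ 2 / |a| * (|a| * ρ / 8) :=
            mul_le_mul_of_nonneg_left hδ (by positivity)
        _ = ρ / 4 := by field_simp; norm_num
    have h3 : ‖T w'‖ ≤ ρ / 4 := by
      refine (T4 w w' hww).trans ?_
      rw [lt_div_iff₀ (by positivity)] at hε3
      nlinarith
    rw [h1]
    refine (norm_add_le _ _).trans ?_
    linarith
  have hQc : Continuous Q := continuous_iff_continuousAt.mpr fun y => (hQan y).continuousAt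
  obtain ⟨N, hN⟩ : ∃ N : C(UnitAddTorus (Fin d), ℝ) → C(UnitAddTorus (Fin d), ℝ),
      ∀ v x, N v x = Q (ζ + v x) :=
    ⟨fun v => ⟨fun x => Q (ζ + v x), by fun_prop⟩, fun _ _ => rfl⟩
  have hNan : ∀ v, AnalyticAt ℝ N v := by
    intro v
    refine rs_comp_analytic (Q := fun y => Q (ζ + y)) (fun y => ?_) N hN v
    have h1 : AnalyticAt ℝ (fun y : ℝ => ζ + y) y := analyticAt_const.add analyticAt_id
    exact (hQan (ζ + y)).comp h1
  have hNlip : ∀ v v' : C(UnitAddTorus (Fin d), ℝ), ‖v‖ ≤ 2 * ρ → ‖v'‖ ≤ 2 * ρ →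
      ‖N v - N v'‖ ≤ |a| / 8 * ‖v - v'‖ := by
    intro v v' hv hv'
    rw [ContinuousMap.norm_le _ (by positivity)]
    intro x
    have hb : ∀ z : C(UnitAddTorus (Fin d), ℝ), ‖z‖ ≤ 2 * ρ → |ζ + z x| ≤ 3 * ρ := by
      intro z hz
      have h1 := z.norm_coe_le_norm x
      rw [Real.norm_eq_abs] at h1
      have h2 := abs_add_le ζ (z x)
      linarith
    change |N v x - N v' x| ≤ _
    rw [hN, hN]
    refine (hQlip _ _ (hb v hv) (hb v' hv')).trans ?_
    have h3 : ζ + v x - (ζ + v' x) = (v - v') x := by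
      change _ = v x - v' x
      ring
    rw [h3]
    exact mul_le_mul_of_nonneg_left ((v - v').norm_coe_le_norm x) (by positivity)
  have hTlip : ∀ v v' : C(UnitAddTorus (Fin d), ℝ), ‖v‖ ≤ 2 * ρ → ‖v'‖ ≤ 2 * ρ →
      ‖T (N v) - T (N v')‖ ≤ 1 / 4 * ‖v - v'‖ := by
    intro v v' hv hv'
    rw [← map_sub]
    calc ‖T (N v - N v')‖ ≤ 2 / |a| * ‖N v - N v'‖ := T1 _
      _ ≤ 2 / |a| * (|a| / 8 * ‖v - v'‖) :=
          mul_le_mul_of_nonneg_left (hNlip v v' hv hv') (by positivity)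
      _ = 1 / 4 * ‖v - v'‖ := by field_simp; ring
  have hNbd : ∀ v : C(UnitAddTorus (Fin d), ℝ), ‖v‖ ≤ ρ → ‖T (N v)‖ ≤ ρ / 2 := by
    intro v hv
    have h1 : ‖N v‖ ≤ |a| / 8 * (2 * ρ) := by
      rw [ContinuousMap.norm_le _ (by positivity)]
      intro x
      have h1 := v.norm_coe_le_norm x
      rw [Real.norm_eq_abs] at h1
      have h2 := abs_add_le ζ (v x)
      have h3 := hQlip (ζ + v x) 0 (by linarith) (by rw [abs_zero]; positivity)
      rw [hQ0, sub_zero, sub_zero] at h3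
      rw [hN, Real.norm_eq_abs]
      refine h3.trans (mul_le_mul_of_nonneg_left ?_ (by positivity))
      linarith
    calc ‖T (N v)‖ ≤ 2 / |a| * ‖N v‖ := T1 _
      _ ≤ 2 / |a| * (|a| / 8 * (2 * ρ)) := mul_le_mul_of_nonneg_left h1 (by positivity)
      _ = ρ / 2 := by field_simp; norm_num
  -- the fixed point
  obtain ⟨U, hUρ, hU⟩ : ∃ U : C(UnitAddTorus (Fin d), ℝ), ‖U‖ ≤ ρ ∧ U + T (N U) = T F := by
    let Θ : C(UnitAddTorus (Fin d), ℝ) → C(UnitAddTorus (Fin d), ℝ) := fun v => T F - T (N v)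
    have hmaps : Set.MapsTo Θ (Metric.closedBall 0 ρ) (Metric.closedBall 0 ρ) := by
      intro v hv
      rw [mem_closedBall_zero_iff] at hv ⊢
      refine (norm_sub_le _ _).trans ?_
      have := hNbd v hv
      linarith
    have hcon : ContractingWith (1 / 4 : ℝ≥0) (hmaps.restrict Θ _ _) := by
      refine ⟨by rw [div_lt_one] <;> norm_num, LipschitzWith.of_dist_le_mul ?_⟩
      rintro ⟨v, hv⟩ ⟨v', hv'⟩
      rw [mem_closedBall_zero_iff] at hv hv'
      change dist (T F - T (N v)) (T F - T (N v')) ≤ _ * dist v v'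
      rw [dist_eq_norm, dist_eq_norm, sub_sub_sub_cancel_left, norm_sub_rev v v']
      refine (hTlip v' v (by linarith) (by linarith)).trans (le_of_eq ?_)
      push_cast
      rfl
    obtain ⟨U, hU1, hU2, _⟩ := hcon.exists_fixedPoint' (x := 0)
      Metric.isClosed_closedBall.isComplete hmaps (by simp [hρ.le]) (edist_ne_top _ _)
    refine ⟨U, mem_closedBall_zero_iff.mp hU1, ?_⟩
    have h1 : T F - T (N U) = U := hU2
    exact (sub_eq_iff_eq_add.mp h1).symm
  have hNtr : ∀ θ v, rsTr d θ (N v) = N (rsTr d θ v) := by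
    intro θ v
    ext x
    rw [rsTr_apply, hN, hN, rsTr_apply]
  refine ⟨fun ψ => U (rsPi d ψ), g c₀ + a * ζ - rsMean d (F - N U), ?_, ?_, ?_, ?_⟩
  · intro ψ₀
    have h1 : AnalyticAt ℝ (fun ψ => rsTr d (rsPi d ψ) U) ψ₀ := by
      refine rs_analytic_solve (fun v => T (N v)) (fun ψ => rsTr d (rsPi d ψ) U)
        (fun ψ => T (rsTr d (rsPi d ψ) F)) ψ₀ ?_ ?_ ?_ ?_ ?_
      · exact (T.analyticAt _).comp (hNan _)
      · exact ((rsTr_continuous d U).comp (rsPi_continuous d)).continuousAt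
      · exact (T.analyticAt _).comp (rs_translate_analytic d f hf hfper F hF ψ₀)
      · have h2 : ‖rsTr d (rsPi d ψ₀) U‖ < 2 * ρ := by
          have := rsTr_norm d (rsPi d ψ₀) U
          linarith
        filter_upwards [(isOpen_lt continuous_norm continuous_const).mem_nhds h2] with v hv
        exact hTlip v _ (le_of_lt hv) h2.le
      · intro ψ
        have h3 := congrArg (rsTr d (rsPi d ψ)) hU
        rw [map_add, T3, T3, hNtr] at h3
        exact h3
    obtain ⟨L, hL⟩ : ∃ L : C(UnitAddTorus (Fin d), ℝ) →L[ℝ] ℝ, ∀ v, L v = v 0 :=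
      ⟨ContinuousMap.evalCLM ℝ (0 : UnitAddTorus (Fin d)), fun _ => rfl⟩
    have h4 : AnalyticAt ℝ (fun ψ => L (rsTr d (rsPi d ψ) U)) ψ₀ := (L.analyticAt _).comp h1
    refine h4.congr (Eventually.of_forall fun ψ => ?_)
    change L (rsTr d (rsPi d ψ) U) = U (rsPi d ψ)
    rw [hL, rsTr_apply, zero_add]
  · intro ψ i
    change U (rsPi d (ψ + Pi.single i (2 * Real.pi))) = U (rsPi d ψ)
    rw [rsPi_periodic]
  · have h1 : rsMean d U = 0 := by
      have h2 : U = T (F - N U) := by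
        rw [map_sub, ← hU]
        abel
      rw [h2, T2]
    rw [← h1]
    exact rsMean_box d U
  · intro t
    have h2 : T (F - N U) = U := by
      rw [map_sub, ← hU]
      abel
    obtain ⟨ud, udd, hu1, hu2, hu3⟩ := T6 (F - N U)
    rw [h2] at hu1 hu3
    have hd1 : ∀ s, HasDerivAt (fun s : ℝ => c₀ + ζ + U (rsPi d (s • ω))) (ud (rsPi d (s • ω))) s := by
      intro s
      have h3 := (hu1 0 s).const_add (c₀ + ζ)
      simp only [zero_add] at h3
      exact h3
    have hd2 : HasDerivAt (fun s : ℝ => ud (rsPi d (s • ω))) (udd (rsPi d (t • ω))) t := by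
      have h3 := hu2 0 t
      simp only [zero_add] at h3
      exact h3
    have hd3 : deriv (fun s : ℝ => c₀ + ζ + U (rsPi d (s • ω))) = fun s => ud (rsPi d (s • ω)) :=
      funext fun s => (hd1 s).deriv
    change ε * deriv (deriv (fun s : ℝ => c₀ + ζ + U (rsPi d (s • ω)))) t
      + deriv (fun s : ℝ => c₀ + ζ + U (rsPi d (s • ω))) t
      + ε * g (c₀ + ζ + U (rsPi d (t • ω))) = _
    rw [hd3, hd2.deriv]
    have h4 := hu3 (rsPi d (t • ω))
    have h5 : (F - N U) (rsPi d (t • ω)) = f (t • ω) - Q (ζ + U (rsPi d (t • ω))) := by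
      change F _ - N U _ = _
      rw [hF, hN]
    rw [h5, hQdef] at h4
    simp only [← add_assoc] at h4
    linear_combination h4
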